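/- Let (r_1, r_2) be a consecutive pair of rows with supp(r_2) ⊆ supp(r_1) that satisfies the alternating sign condition. Let (r'_2, r'_1) be the result of the Case 1 row exchange. Then l(r'_1) = l(r_1) − C(r_2), η(r'_1) = (−1)^{C(r_2)} η(r_1), l(r'_2) = l(r_2), and η(r'_2) = (−1)^{C(r_1)+1} η(r_2). Moreover, the resulting pair (r'_2, r'_1) fails the alternating sign condition, i.e. η(r'_1) = −(−1)^{C(r'_2)} η(r'_2). -/

import Mathlib

/-- A row `r = (A, B, l, η)`: the data of an extended segment `([A, B], l, η)`
(with the constraints `B ≤ A` and `η ∈ {1, -1}` imposed as hypotheses via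
`IsRow`). Its support is the integer interval `[B, A]`. -/
structure Row where
  A : ℤ
  B : ℤ
  l : ℤ
  eta : ℤ
deriving DecidableEq

instance : Inhabited Row := ⟨⟨0, 0, 0, 1⟩⟩

/-- `(-1)^n` for an integer `n` (only the parity of `n` matters). -/
def epow (n : ℤ) : ℤ := (-1) ^ n.natAbs

/-- `b(r) = A - B + 1`, the length of the support of `r`. -/
def Row.b (r : Row) : ℤ := r.A - r.B + 1

/-- `C(r) = b(r) - 2l(r)`, the number of circles of `r`. -/
def Row.C (r : Row) : ℤ := r.b - 2 * r.l

/-- The defining constraints on a row: `B ≤ A` and `η ∈ {1, -1}`. -/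
def IsRow (r : Row) : Prop := r.B ≤ r.A ∧ (r.eta = 1 ∨ r.eta = -1)

/-- The ordered pair of consecutive rows `(r₁, r₂)` satisfies the alternating
sign condition: `η(r₂) = (-1)^{C(r₁)} η(r₁)`. -/
def Alt (r₁ r₂ : Row) : Prop := r₂.eta = epow r₁.C * r₁.eta

/-- Case 1 row exchange of the consecutive pair `(r₁, r₂)` (for
`supp(r₂) ⊆ supp(r₁)`); the result `(r₂', r₁')` is in the opposite order. -/
def exchange1 (r₁ r₂ : Row) : Row × Row :=
  let ε : ℤ := epow (r₁.A - r₁.B) * r₁.eta * r₂.eta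
  let c₂ : ℤ := r₂.b - 2 * r₂.l
  let s₂ : Row := ⟨r₂.A, r₂.B, r₂.l, epow (r₁.A - r₁.B) * r₂.eta⟩
  let s₁ : Row :=
    if ε = 1 ∧ r₁.b - 2 * r₁.l < 2 * c₂ then
      ⟨r₁.A, r₁.B, r₁.b - (r₁.l + c₂), epow (r₂.A - r₂.B) * r₁.eta⟩
    else if ε = 1 then
      ⟨r₁.A, r₁.B, r₁.l + c₂, epow (r₂.A - r₂.B + 1) * r₁.eta⟩
    else
      ⟨r₁.A, r₁.B, r₁.l - c₂, epow (r₂.A - r₂.B + 1) * r₁.eta⟩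
  (s₂, s₁)

/-- Case 2 row exchange of the consecutive pair `(r₁, r₂)` (for
`supp(r₁) ⊆ supp(r₂)`); the result `(r₂', r₁')` is in the opposite order. -/
def exchange2 (r₁ r₂ : Row) : Row × Row :=
  let ε : ℤ := epow (r₁.A - r₁.B) * r₁.eta * r₂.eta
  let c₁ : ℤ := r₁.b - 2 * r₁.l
  let s₁ : Row := ⟨r₁.A, r₁.B, r₁.l, epow (r₂.A - r₂.B) * r₁.eta⟩
  let s₂ : Row :=
    if ε = 1 ∧ r₂.b - 2 * r₂.l < 2 * c₁ then
      ⟨r₂.A, r₂.B, r₂.b - (r₂.l + c₁), epow (r₁.A - r₁.B) * r₂.eta⟩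
    else if ε = 1 then
      ⟨r₂.A, r₂.B, r₂.l + c₁, epow (r₁.A - r₁.B + 1) * r₂.eta⟩
    else
      ⟨r₂.A, r₂.B, r₂.l - c₁, epow (r₁.A - r₁.B + 1) * r₂.eta⟩
  (s₂, s₁)

theorem epow_sub_two (n l : ℤ) : epow (n - 2 * l) = epow n := by
  unfold epow
  rcases Int.even_or_odd n with h | h
  · rw [Even.neg_one_pow (Int.natAbs_even.2 h),
      Even.neg_one_pow (Int.natAbs_even.2 (h.sub (even_two_mul l)))]
  · rw [Odd.neg_one_pow (Int.natAbs_odd.2 h),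
      Odd.neg_one_pow (Int.natAbs_odd.2 (h.sub_even (even_two_mul l)))]

theorem epow_succ (n : ℤ) : epow (n + 1) = - epow n := by
  unfold epow
  rcases Int.even_or_odd n with h | h
  · rw [Even.neg_one_pow (Int.natAbs_even.2 h), Odd.neg_one_pow (Int.natAbs_odd.2 h.add_one)]
  · rw [Odd.neg_one_pow (Int.natAbs_odd.2 h), Even.neg_one_pow (Int.natAbs_even.2 h.add_one)]
    norm_num

theorem epow_cases (n : ℤ) : epow n = 1 ∨ epow n = -1 := neg_one_pow_eq_or ℤ _

theorem epow_C (r : Row) : epow r.C = - epow (r.A - r.B) := by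
  unfold Row.C Row.b
  rw [epow_sub_two, epow_succ]

/-- Swap down (Lemma `swap down`): if `(r₁, r₂)` is a consecutive pair with
`supp(r₂) ⊆ supp(r₁)` satisfying the alternating sign condition, and
`(r₂', r₁')` is the result of the Case 1 row exchange, then
`l(r₁') = l(r₁) − C(r₂)`, `η(r₁') = (−1)^{C(r₂)} η(r₁)`, `l(r₂') = l(r₂)`,
`η(r₂') = (−1)^{C(r₁)+1} η(r₂)`, and the pair `(r₂', r₁')` fails the
alternating sign condition. -/
theorem swap_down (r₁ r₂ : Row) (h₁ : IsRow r₁) (h₂ : IsRow r₂)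
    (hsupp : r₁.B ≤ r₂.B ∧ r₂.A ≤ r₁.A) (halt : Alt r₁ r₂) :
    let p := exchange1 r₁ r₂
    p.2.l = r₁.l - r₂.C ∧
    p.2.eta = epow r₂.C * r₁.eta ∧
    p.1.l = r₂.l ∧
    p.1.eta = epow (r₁.C + 1) * r₂.eta ∧
    p.2.eta = -(epow p.1.C * p.1.eta) := by
  have hC := epow_C r₁
  have hC2 := epow_C r₂
  unfold Alt at halt
  rw [hC] at halt
  have hε : ¬ (epow (r₁.A - r₁.B) * r₁.eta * r₂.eta = 1) := by
    rw [halt]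
    rcases epow_cases (r₁.A - r₁.B) with h | h <;> rcases h₁.2 with h' | h' <;>
      rw [h, h'] <;> norm_num
  have hs : epow (r₁.A - r₁.B) * epow (r₁.A - r₁.B) = 1 := by
    rcases epow_cases (r₁.A - r₁.B) with h | h <;> rw [h] <;> norm_num
  have hC3 : epow (Row.C ⟨r₂.A, r₂.B, r₂.l, epow (r₁.A - r₁.B) * r₂.eta⟩)
      = - epow (r₂.A - r₂.B) := epow_C _
  simp only [exchange1, hε, false_and, if_false]
  refine ⟨rfl, ?_, trivial, ?_, ?_⟩
  · rw [hC2, epow_succ]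
  · rw [epow_succ, hC, neg_neg]
  · rw [hC3, epow_succ, halt]
    linear_combination (epow (r₂.A - r₂.B) * r₁.eta) * hs
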